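/- arXiv:2605.17167 — 3 statements merged into one kernel-verified Lean document; each statement's English description precedes it below -/
import Mathlib

section
/- Let ρ and σ be n×n positive definite complex density matrices. Then for every t ∈ [0,1], 0 < F_t^spec(ρ,σ) ≤ 1. -/
/-!
Write `G = ρ⁻¹ ♯ σ`. This positive definite matrix solves the Riccati equation `G * ρ * G = σ`, so
`Tr (ρ G²) = Tr σ = 1`. Diagonalize `G = U diag(λ) U*` and put `p i = (U* ρ U) i i`. Then
`Tr (ρ G ^ s) = ∑ i, p i * λ i ^ s` for every real `s`, with `p i > 0`. Taking `s = 0` and `s = 2`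
gives `∑ p i = 1` and `∑ p i * λ i ^ 2 = 1`. At `s = 2 * t`, weighted AM-GM bounds each
`λ i ^ (2 * t)` by `(1 - t) + t * λ i ^ 2`, and averaging against `p` gives the upper bound `1`.
-/

open Matrix
open scoped ComplexOrder

/-- Real power of a matrix by functional calculus on the eigenvalues
(junk value `0` if the matrix is not Hermitian).  Since eigenvalue powers
are real powers (`Real.rpow`) of real numbers, the conventions `0 ^ 0 = 1`
and `0 ^ s = 0` for `s > 0` hold on positive semidefinite matrices. -/
noncomputable def mpow {n : Type*} [Fintype n] [DecidableEq n]
    (A : Matrix n n ℂ) (r : ℝ) : Matrix n n ℂ :=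
  if hA : A.IsHermitian then
    (hA.eigenvectorUnitary : Matrix n n ℂ) *
      Matrix.diagonal (fun i => ((hA.eigenvalues i ^ r : ℝ) : ℂ)) *
      (star (hA.eigenvectorUnitary : Matrix n n ℂ))
  else 0

/-- The matrix geometric mean `A ♯ B = A^{1/2} (A^{-1/2} B A^{-1/2})^{1/2} A^{1/2}`. -/
noncomputable def msharp {n : Type*} [Fintype n] [DecidableEq n]
    (A B : Matrix n n ℂ) : Matrix n n ℂ :=
  mpow A (1/2) * mpow (mpow A (-(1/2)) * B * mpow A (-(1/2))) (1/2) * mpow A (1/2)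

/-- The weighted spectral fidelity `F_t^spec(ρ,σ) = Tr(ρ (ρ⁻¹ ♯ σ)^{2t})`. -/
noncomputable def specFid {n : Type*} [Fintype n] [DecidableEq n]
    (t : ℝ) (ρ σ : Matrix n n ℂ) : ℂ :=
  Matrix.trace (ρ * mpow (msharp ρ⁻¹ σ) (2 * t))

theorem mpow_of_isHermitian {n : Type*} [Fintype n] [DecidableEq n]
    {A : Matrix n n ℂ} (hA : A.IsHermitian) (r : ℝ) :
    mpow A r = (hA.eigenvectorUnitary : Matrix n n ℂ) *
      Matrix.diagonal (fun i => ((hA.eigenvalues i ^ r : ℝ) : ℂ)) *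
      (star (hA.eigenvectorUnitary : Matrix n n ℂ)) := dif_pos hA

theorem mpow_zero {n : Type*} [Fintype n] [DecidableEq n]
    {A : Matrix n n ℂ} (hA : A.IsHermitian) : mpow A 0 = 1 := by
  rw [mpow_of_isHermitian hA]
  simp

theorem mpow_one {n : Type*} [Fintype n] [DecidableEq n]
    {A : Matrix n n ℂ} (hA : A.IsHermitian) : mpow A 1 = A := by
  rw [mpow_of_isHermitian hA]
  conv_rhs => rw [hA.spectral_theorem]
  simp [Unitary.conjStarAlgAut_apply, Function.comp_def]

theorem mpow_mul_mpow {n : Type*} [Fintype n] [DecidableEq n]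
    {A : Matrix n n ℂ} (hA : A.PosDef) (r s : ℝ) :
    mpow A r * mpow A s = mpow A (r + s) := by
  have hU : star (hA.1.eigenvectorUnitary : Matrix n n ℂ) * hA.1.eigenvectorUnitary = 1 :=
    Unitary.coe_star_mul_self _
  simp only [mpow_of_isHermitian hA.1]
  set U := (hA.1.eigenvectorUnitary : Matrix n n ℂ)
  have hd : Matrix.diagonal (fun i => ((hA.1.eigenvalues i ^ (r + s) : ℝ) : ℂ)) =
      Matrix.diagonal (fun i => ((hA.1.eigenvalues i ^ r : ℝ) : ℂ)) *
      Matrix.diagonal (fun i => ((hA.1.eigenvalues i ^ s : ℝ) : ℂ)) := by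
    rw [Matrix.diagonal_mul_diagonal]
    congr 1
    funext i
    rw [Real.rpow_add (hA.eigenvalues_pos i)]
    push_cast
    rfl
  rw [hd]
  simp only [Matrix.mul_assoc]
  rw [← Matrix.mul_assoc (star U) U, hU, Matrix.one_mul]

theorem mpow_posDef {n : Type*} [Fintype n] [DecidableEq n]
    {A : Matrix n n ℂ} (hA : A.PosDef) (r : ℝ) : (mpow A r).PosDef := by
  rw [mpow_of_isHermitian hA.1]
  have hd : (Matrix.diagonal (fun i => ((hA.1.eigenvalues i ^ r : ℝ) : ℂ))).PosDef := by
    rw [Matrix.posDef_diagonal_iff]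
    intro i
    exact_mod_cast Real.rpow_pos_of_pos (hA.eigenvalues_pos i) r
  exact hd.mul_mul_conjTranspose_same
    (Matrix.vecMul_injective_of_isUnit (Unitary.toUnits hA.1.eigenvectorUnitary).isUnit)

/-- Conjugating by a real power, which is Hermitian and invertible, preserves positive
definiteness. -/
theorem mpow_conj_posDef {n : Type*} [Fintype n] [DecidableEq n]
    {A B : Matrix n n ℂ} (hA : A.PosDef) (hB : B.PosDef) (r : ℝ) :
    (mpow A r * B * mpow A r).PosDef := by
  have h := hB.mul_mul_conjTranspose_same
    (Matrix.vecMul_injective_of_isUnit (mpow_posDef hA r).isUnit)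
  rwa [(mpow_posDef hA r).1.eq] at h

theorem msharp_posDef {n : Type*} [Fintype n] [DecidableEq n]
    {A B : Matrix n n ℂ} (hA : A.PosDef) (hB : B.PosDef) : (msharp A B).PosDef :=
  mpow_conj_posDef hA (mpow_posDef (mpow_conj_posDef hA hB _) _) _

/-- The Riccati equation `G A⁻¹ G = B` for `G = A ♯ B`, with `A = ρ⁻¹`. -/
theorem msharp_inv_riccati {n : Type*} [Fintype n] [DecidableEq n]
    {ρ σ : Matrix n n ℂ} (hρ : ρ.PosDef) (hσ : σ.PosDef) :
    msharp ρ⁻¹ σ * ρ * msharp ρ⁻¹ σ = σ := by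
  have hA : (ρ⁻¹).PosDef := hρ.inv
  have hX := mpow_conj_posDef hA hσ (-(1 / 2))
  have hhh := mpow_mul_mpow hX (1 / 2) (1 / 2)
  rw [add_halves, mpow_one hX.1] at hhh
  have hab := mpow_mul_mpow hA (1 / 2) (-(1 / 2))
  rw [add_neg_cancel, mpow_zero hA.1] at hab
  have hba := mpow_mul_mpow hA (-(1 / 2)) (1 / 2)
  rw [neg_add_cancel, mpow_zero hA.1] at hba
  have haa := mpow_mul_mpow hA (1 / 2) (1 / 2)
  rw [add_halves, mpow_one hA.1] at haa
  unfold msharp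
  set a := mpow ρ⁻¹ (1 / 2)
  set b := mpow ρ⁻¹ (-(1 / 2))
  set h := mpow (b * σ * b) (1 / 2)
  have hρi : ρ⁻¹ * ρ = 1 := Matrix.nonsing_inv_mul ρ ((Matrix.isUnit_iff_isUnit_det ρ).1 hρ.isUnit)
  have haρa : a * ρ * a = 1 := by
    calc a * ρ * a = (b * a) * (a * ρ * a) := by rw [hba, Matrix.one_mul]
      _ = b * ((a * a) * ρ) * a := by simp only [Matrix.mul_assoc]
      _ = 1 := by rw [haa, hρi, Matrix.mul_one, hba]
  calc a * h * a * ρ * (a * h * a) = a * h * (a * ρ * a) * h * a := by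
        simp only [Matrix.mul_assoc]
    _ = a * (h * h) * a := by rw [haρa, Matrix.mul_one]; simp only [Matrix.mul_assoc]
    _ = (a * b) * σ * (b * a) := by rw [hhh]; simp only [Matrix.mul_assoc]
    _ = σ := by rw [hab, hba, Matrix.one_mul, Matrix.mul_one]

/-- The spectral formula `Tr (ρ G ^ s) = ∑ i, p i * l i ^ s`: the `l i > 0` are the eigenvalues of
`G`, and the weights `p i > 0` are the diagonal entries of `ρ` in an eigenbasis of `G`. Neither
depends on `s`. -/
theorem exists_trace_mul_mpow {n : Type*} [Fintype n] [DecidableEq n]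
    {ρ G : Matrix n n ℂ} (hρ : ρ.PosDef) (hG : G.PosDef) :
    ∃ p l : n → ℝ, (∀ i, 0 < p i) ∧ (∀ i, 0 < l i) ∧
      ∀ s : ℝ, (ρ * mpow G s).trace = ((∑ i, p i * l i ^ s : ℝ) : ℂ) := by
  set U := (hG.1.eigenvectorUnitary : Matrix n n ℂ) with hU
  have hP : (star U * ρ * U).PosDef := hρ.conjTranspose_mul_mul_same
    (Matrix.mulVec_injective_of_isUnit (Unitary.toUnits hG.1.eigenvectorUnitary).isUnit)
  have hpos : ∀ i, 0 < (star U * ρ * U) i i := fun i => hP.diag_pos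
  refine ⟨fun i => ((star U * ρ * U) i i).re, hG.1.eigenvalues,
    fun i => (Complex.pos_iff.1 (hpos i)).1, hG.eigenvalues_pos, fun s => ?_⟩
  rw [mpow_of_isHermitian hG.1, ← hU, ← Matrix.mul_assoc, Matrix.trace_mul_comm,
    ← Matrix.mul_assoc, ← Matrix.mul_assoc, Matrix.trace]
  push_cast
  refine Finset.sum_congr rfl fun i _ => ?_
  have hre : (((star U * ρ * U) i i).re : ℂ) = (star U * ρ * U) i i :=
    Complex.ext rfl (by simpa using (Complex.pos_iff.1 (hpos i)).2)
  rw [Matrix.diag_apply, Matrix.mul_diagonal, hre]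

/-- Universal bounds: `0 < F_t^spec(ρ,σ) ≤ 1` for all `t ∈ [0,1]`
(the inequalities are stated in `ℂ` with the complex order, which in
particular asserts that the value is real). -/
theorem specFid_pos_le_one {n : Type*} [Fintype n] [DecidableEq n]
    (ρ σ : Matrix n n ℂ) (hρ : ρ.PosDef) (hσ : σ.PosDef)
    (hρ1 : ρ.trace = 1) (hσ1 : σ.trace = 1) :
    ∀ t ∈ Set.Icc (0 : ℝ) 1, 0 < specFid t ρ σ ∧ specFid t ρ σ ≤ 1 := by
  rintro t ⟨ht0, ht1⟩
  have hG : (msharp ρ⁻¹ σ).PosDef := msharp_posDef hρ.inv hσ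
  obtain ⟨p, l, hp, hl, htr⟩ := exists_trace_mul_mpow hρ hG
  have h0 : ∑ i, p i = 1 := by
    have h := htr 0
    rw [mpow_zero hG.1, Matrix.mul_one, hρ1] at h
    simp only [Real.rpow_zero, mul_one] at h
    exact_mod_cast h.symm
  have h2 : ∑ i, p i * l i ^ (2 : ℝ) = 1 := by
    have h := htr 2
    rw [← one_add_one_eq_two, ← mpow_mul_mpow hG, mpow_one hG.1, ← Matrix.mul_assoc,
      Matrix.trace_mul_comm, ← Matrix.mul_assoc, msharp_inv_riccati hρ hσ, hσ1,
      one_add_one_eq_two] at h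
    exact_mod_cast h.symm
  -- On an empty index type the trace would be `0`, so `Tr ρ = 1` gives a nonempty sum.
  have hne : (Finset.univ : Finset n).Nonempty := by
    rw [Finset.nonempty_iff_ne_empty]
    intro h
    rw [h] at h0
    simp at h0
  rw [specFid, htr]
  constructor
  · exact_mod_cast Finset.sum_pos
      (fun i _ => mul_pos (hp i) (Real.rpow_pos_of_pos (hl i) (2 * t))) hne
  · have key : ∑ i, p i * l i ^ (2 * t) ≤ 1 := by
      calc ∑ i, p i * l i ^ (2 * t)
          ≤ ∑ i, ((1 - t) * p i + t * (p i * l i ^ (2 : ℝ))) := by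
            refine Finset.sum_le_sum fun i _ => ?_
            have h := Real.geom_mean_le_arith_mean2_weighted (sub_nonneg.2 ht1) ht0 zero_le_one
              (Real.rpow_nonneg (hl i).le 2) (sub_add_cancel 1 t)
            rw [Real.one_rpow, one_mul, ← Real.rpow_mul (hl i).le] at h
            linarith [mul_le_mul_of_nonneg_left h (hp i).le]
        _ = 1 := by
            rw [Finset.sum_add_distrib, ← Finset.mul_sum, ← Finset.mul_sum, h0, h2]
            ring
    exact_mod_cast key
end

section
/- Let ρ₁, σ₁ be n×n and ρ₂, σ₂ be m×m positive definite complex density matrices, and let t ∈ [0,1]. Then F_t^spec(ρ₁ ⊗ ρ₂, σ₁ ⊗ σ₂) = F_t^spec(ρ₁,σ₁) · F_t^spec(ρ₂,σ₂), where ⊗ denotes the Kronecker (tensor) product. -/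
/-!
The real powers `A ↦ A ^ r` do not depend on the choice of a unitary diagonalization
(`mpow_eq_of_diag`): if `V diag(e) V* = U diag(d) U*`, then `W = V* U` satisfies
`e i * W i j = W i j * d j`, so `e i = d j` wherever `W i j ≠ 0`, and the same identity holds
with `e`, `d` replaced by their `r`-th powers. Diagonalizing `A ⊗ B` by the Kronecker product of
the eigenvector unitaries, and using that real powers are multiplicative on nonnegative reals,
gives `(A ⊗ B) ^ r = A ^ r ⊗ B ^ r` for positive semidefinite `A`, `B` (`mpow_kronecker`).
Products, inverses and traces are compatible with Kronecker products as well, so the geometric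
mean, and then the fidelity, factor. Every matrix whose power is taken is positive semidefinite,
being a power of such a matrix or a congruence `S B S` with `S` Hermitian.
-/

open Matrix
open scoped ComplexOrder

/-- Real powers can be computed from any unitary diagonalization. -/
theorem mpow_eq_of_diag {n : Type*} [Fintype n] [DecidableEq n]
    (U : Matrix n n ℂ) (hU : U ∈ Matrix.unitaryGroup n ℂ) (d : n → ℝ)
    {A : Matrix n n ℂ} (hA : A = U * diagonal (fun i => (d i : ℂ)) * star U) (r : ℝ) :
    mpow A r = U * diagonal (fun i => ((d i ^ r : ℝ) : ℂ)) * star U := by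
  have hH : A.IsHermitian := by
    subst hA
    simp [Matrix.IsHermitian, conjTranspose_mul, star_eq_conjTranspose, Matrix.mul_assoc,
      diagonal_conjTranspose, Pi.star_def]
  have hV := hH.eigenvectorUnitary.2
  have hspec := hH.spectral_theorem
  rw [Unitary.conjStarAlgAut_apply] at hspec
  rw [mpow, dif_pos hH]
  set V : Matrix n n ℂ := (hH.eigenvectorUnitary : Matrix n n ℂ)
  set e := hH.eigenvalues
  have hVV : star V * V = 1 := Matrix.mem_unitaryGroup_iff'.1 hV
  have hVV' : V * star V = 1 := Matrix.mem_unitaryGroup_iff.1 hV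
  have hUU : star U * U = 1 := Matrix.mem_unitaryGroup_iff'.1 hU
  have hUU' : U * star U = 1 := Matrix.mem_unitaryGroup_iff.1 hU
  have key : diagonal (fun i => (e i : ℂ)) * (star V * U)
      = (star V * U) * diagonal (fun i => (d i : ℂ)) := by
    have h : V * diagonal (fun i => (e i : ℂ)) * star V
        = U * diagonal (fun i => (d i : ℂ)) * star U := hspec.symm.trans hA
    calc _ = (star V * V) * diagonal (fun i => (e i : ℂ)) * (star V * U) := by
            rw [hVV, Matrix.one_mul]
      _ = star V * (V * diagonal (fun i => (e i : ℂ)) * star V) * U := by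
            simp only [Matrix.mul_assoc]
      _ = (star V * U) * diagonal (fun i => (d i : ℂ)) * (star U * U) := by
            rw [h]; simp only [Matrix.mul_assoc]
      _ = _ := by rw [hUU, Matrix.mul_one]
  have key' : diagonal (fun i => ((e i ^ r : ℝ) : ℂ)) * (star V * U)
      = (star V * U) * diagonal (fun i => ((d i ^ r : ℝ) : ℂ)) := by
    ext i j
    have h := congrFun (congrFun key i) j
    rw [diagonal_mul, mul_diagonal] at h ⊢
    by_cases hW : (star V * U) i j = 0
    · simp [hW]
    · rw [mul_comm] at h
      have : e i = d j := by exact_mod_cast mul_left_cancel₀ hW h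
      rw [this, mul_comm]
  calc _ = V * (diagonal (fun i => ((e i ^ r : ℝ) : ℂ)) * (star V * U)) * star U := by
          simp only [Matrix.mul_assoc, hUU', Matrix.mul_one]
    _ = (V * star V) * U * diagonal (fun i => ((d i ^ r : ℝ) : ℂ)) * star U := by
          rw [key']; simp only [Matrix.mul_assoc]
    _ = _ := by rw [hVV', Matrix.one_mul]

theorem mpow_posSemidef {n : Type*} [Fintype n] [DecidableEq n]
    {A : Matrix n n ℂ} (hA : A.PosSemidef) (r : ℝ) : (mpow A r).PosSemidef := by
  rw [mpow, dif_pos hA.1]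
  refine PosSemidef.mul_mul_conjTranspose_same (PosSemidef.diagonal fun i => ?_) _
  simpa using Real.rpow_nonneg (hA.eigenvalues_nonneg i) r

theorem mul_mul_posSemidef {n : Type*} [Fintype n]
    {S B : Matrix n n ℂ} (hS : S.IsHermitian) (hB : B.PosSemidef) : (S * B * S).PosSemidef := by
  have h := hB.mul_mul_conjTranspose_same S
  rwa [hS.eq] at h

theorem msharp_posSemidef {n : Type*} [Fintype n] [DecidableEq n]
    {A B : Matrix n n ℂ} (hA : A.PosSemidef) (hB : B.PosSemidef) : (msharp A B).PosSemidef :=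
  mul_mul_posSemidef (mpow_posSemidef hA _).1
    (mpow_posSemidef (mul_mul_posSemidef (mpow_posSemidef hA _).1 hB) _)

open Kronecker in
theorem mpow_kronecker {n m : Type*} [Fintype n] [DecidableEq n] [Fintype m] [DecidableEq m]
    {A : Matrix n n ℂ} {B : Matrix m m ℂ} (hA : A.PosSemidef) (hB : B.PosSemidef) (r : ℝ) :
    mpow (A ⊗ₖ B) r = mpow A r ⊗ₖ mpow B r := by
  have hsA := hA.1.spectral_theorem
  have hsB := hB.1.spectral_theorem
  rw [Unitary.conjStarAlgAut_apply] at hsA hsB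
  rw [mpow_eq_of_diag ((hA.1.eigenvectorUnitary : Matrix n n ℂ) ⊗ₖ
      (hB.1.eigenvectorUnitary : Matrix m m ℂ))
      (kronecker_mem_unitary hA.1.eigenvectorUnitary.2 hB.1.eigenvectorUnitary.2)
      (fun p => hA.1.eigenvalues p.1 * hB.1.eigenvalues p.2) ?_ r,
    mpow, dif_pos hA.1, mpow, dif_pos hB.1, mul_kronecker_mul, mul_kronecker_mul,
    diagonal_kronecker_diagonal, star_eq_conjTranspose, conjTranspose_kronecker]
  · congr 3
    funext p
    rw [Real.mul_rpow (hA.eigenvalues_nonneg _) (hB.eigenvalues_nonneg _), Complex.ofReal_mul]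
  · conv_lhs => rw [hsA, hsB]
    rw [mul_kronecker_mul, mul_kronecker_mul, diagonal_kronecker_diagonal,
      star_eq_conjTranspose, star_eq_conjTranspose, star_eq_conjTranspose,
      conjTranspose_kronecker]
    simp

open Kronecker in
theorem msharp_kronecker {n m : Type*} [Fintype n] [DecidableEq n] [Fintype m] [DecidableEq m]
    {A₁ B₁ : Matrix n n ℂ} {A₂ B₂ : Matrix m m ℂ} (hA₁ : A₁.PosSemidef) (hB₁ : B₁.PosSemidef)
    (hA₂ : A₂.PosSemidef) (hB₂ : B₂.PosSemidef) :
    msharp (A₁ ⊗ₖ A₂) (B₁ ⊗ₖ B₂) = msharp A₁ B₁ ⊗ₖ msharp A₂ B₂ := by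
  simp only [msharp]
  rw [mpow_kronecker hA₁ hA₂, mpow_kronecker hA₁ hA₂, ← mul_kronecker_mul, ← mul_kronecker_mul,
    mpow_kronecker (mul_mul_posSemidef (mpow_posSemidef hA₁ _).1 hB₁)
      (mul_mul_posSemidef (mpow_posSemidef hA₂ _).1 hB₂),
    ← mul_kronecker_mul, ← mul_kronecker_mul]

open Kronecker in
/-- Multiplicativity of the weighted spectral fidelity under tensor
(Kronecker) products. -/
theorem specFid_kronecker_mul {n m : Type*} [Fintype n] [DecidableEq n]
    [Fintype m] [DecidableEq m]
    (ρ₁ σ₁ : Matrix n n ℂ) (ρ₂ σ₂ : Matrix m m ℂ)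
    (hρ₁ : ρ₁.PosDef) (hσ₁ : σ₁.PosDef) (hρ₂ : ρ₂.PosDef) (hσ₂ : σ₂.PosDef)
    (hρ₁1 : ρ₁.trace = 1) (hσ₁1 : σ₁.trace = 1)
    (hρ₂1 : ρ₂.trace = 1) (hσ₂1 : σ₂.trace = 1)
    (t : ℝ) (ht : t ∈ Set.Icc (0 : ℝ) 1) :
    specFid t (ρ₁ ⊗ₖ ρ₂) (σ₁ ⊗ₖ σ₂) = specFid t ρ₁ σ₁ * specFid t ρ₂ σ₂ := by
  have h₁ := hρ₁.inv.posSemidef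
  have h₂ := hρ₂.inv.posSemidef
  rw [specFid, inv_kronecker, msharp_kronecker h₁ hσ₁.posSemidef h₂ hσ₂.posSemidef,
    mpow_kronecker (msharp_posSemidef h₁ hσ₁.posSemidef) (msharp_posSemidef h₂ hσ₂.posSemidef),
    ← mul_kronecker_mul, trace_kronecker, specFid, specFid]
end

section
/- Let ρ and σ be n×n positive definite complex density matrices and let t ∈ [0,1/2]. Consider the set K(ρ,σ) of positive semidefinite n×n matrices T such that the 2n×2n block matrix [[ρ^{-1}, T], [T, σ]] is positive semidefinite. Then F_t^spec(ρ,σ) is the greatest value of Tr(ρ T^{2t}) over T ∈ K(ρ,σ) (here T^{2t} is defined by functional calculus on positive semidefinite T, with 0^0 := 1 and 0^s := 0 for s > 0), and this maximum is attained at T = ρ^{-1}♯σ. -/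
/-!
Write `P = ρ⁻¹`. By the Schur complement, `[[P, T], [T, σ]] ⪰ 0` is equivalent to the Riccati
inequality `T P⁻¹ T ≤ σ` (`block_posSemidef_iff`). Conjugating by `P^{-1/2}` turns it into
`(P^{-1/2} T P^{-1/2})² ≤ P^{-1/2} σ P^{-1/2}`, and operator monotonicity of the square root gives
`T ≤ P ♯ σ`; moreover `P ♯ σ` itself solves the Riccati equation `T P⁻¹ T = σ`, so it is the
largest element of `K(ρ,σ)` (`le_msharp`, `msharp_riccati`). As `0 ≤ 2t ≤ 1`, the Löwner–Heinz inequality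
(`CFC.rpow_le_rpow`) yields `T^{2t} ≤ (P ♯ σ)^{2t}`, and `X ↦ Tr(ρ X)` is monotone.
-/

open Matrix
open scoped ComplexOrder

open scoped MatrixOrder Matrix.Norms.L2Operator

section

variable {n : Type*} [Fintype n] [DecidableEq n]

/-- On positive semidefinite matrices the eigenvalue power `mpow` is Mathlib's `CFC.rpow`. -/
lemma mpow_eq_rpow {A : Matrix n n ℂ} (hA : 0 ≤ A) (r : ℝ) : mpow A r = A ^ r := by
  have h : A.IsHermitian := (Matrix.nonneg_iff_posSemidef.1 hA).1
  rw [CFC.rpow_eq_cfc_real hA, h.cfc_eq, mpow, dif_pos h, Matrix.IsHermitian.cfc,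
    Unitary.conjStarAlgAut_apply]
  rfl

lemma mpow_half_mul_self {A : Matrix n n ℂ} (hA : 0 ≤ A) : mpow A (1/2) * mpow A (1/2) = A := by
  rw [mpow_eq_rpow hA, ← CFC.sqrt_eq_rpow, CFC.sqrt_mul_sqrt_self A hA]

lemma mpow_nonneg {A : Matrix n n ℂ} (hA : 0 ≤ A) (r : ℝ) : 0 ≤ mpow A r := by
  rw [mpow_eq_rpow hA]; exact CFC.rpow_nonneg

lemma mpow_mul_mpow_neg {A : Matrix n n ℂ} (hA : A.PosDef) (r : ℝ) :
    mpow A r * mpow A (-r) = 1 := by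
  rw [mpow_eq_rpow hA.posSemidef.nonneg, mpow_eq_rpow hA.posSemidef.nonneg]
  exact CFC.rpow_mul_rpow_neg r hA.isStrictlyPositive

lemma mpow_neg_mul_mpow {A : Matrix n n ℂ} (hA : A.PosDef) (r : ℝ) :
    mpow A (-r) * mpow A r = 1 := by
  simpa using mpow_mul_mpow_neg hA (-r)

lemma mpow_neg_half_mul_self {A : Matrix n n ℂ} (hA : A.PosDef) :
    mpow A (-(1/2)) * mpow A (-(1/2)) = A⁻¹ := by
  refine (Matrix.inv_eq_right_inv ?_).symm
  have h := mpow_mul_mpow_neg hA (1/2)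
  calc A * (mpow A (-(1/2)) * mpow A (-(1/2)))
      = mpow A (1/2) * (mpow A (1/2) * mpow A (-(1/2))) * mpow A (-(1/2)) := by
        simp only [← mul_assoc, mpow_half_mul_self hA.posSemidef.nonneg]
    _ = 1 := by rw [h, mul_one, h]

omit [DecidableEq n] in
lemma conj_mono {A B c : Matrix n n ℂ} (hc : 0 ≤ c) (h : A ≤ B) : c * A * c ≤ c * B * c := by
  have hc' : star c = c := (IsSelfAdjoint.of_nonneg hc).star_eq
  simpa [hc'] using star_left_conjugate_le_conjugate h c

lemma msharp_nonneg {P σ : Matrix n n ℂ} (hP : P.PosDef) (hσ : 0 ≤ σ) : 0 ≤ msharp P σ := by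
  have hP0 := hP.posSemidef.nonneg
  have h1 := conj_mono (mpow_nonneg hP0 (-(1/2))) hσ
  rw [mul_zero, zero_mul] at h1
  simpa [msharp] using conj_mono (mpow_nonneg hP0 (1/2)) (mpow_nonneg h1 (1/2))

/-- `P ♯ σ` solves the Riccati equation `T P⁻¹ T = σ`. -/
lemma msharp_riccati {P σ : Matrix n n ℂ} (hP : P.PosDef) (hσ : 0 ≤ σ) :
    msharp P σ * P⁻¹ * msharp P σ = σ := by
  have hP0 := hP.posSemidef.nonneg
  have h1 := conj_mono (mpow_nonneg hP0 (-(1/2))) hσ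
  rw [mul_zero, zero_mul] at h1
  have hC := mpow_half_mul_self h1
  have hab := mpow_mul_mpow_neg hP (1/2)
  have hba := mpow_neg_mul_mpow hP (1/2)
  rw [← mpow_neg_half_mul_self hP, msharp]
  generalize mpow P (1/2) = a at *
  generalize mpow P (-(1/2)) = b at *
  generalize mpow (b * σ * b) (1/2) = s at *
  calc a * s * a * (b * b) * (a * s * a)
      = a * s * (a * b) * (b * a) * s * a := by simp only [mul_assoc]
    _ = a * (s * s) * a := by rw [hab, hba]; simp only [mul_assoc, mul_one]
    _ = (a * b) * σ * (b * a) := by rw [hC]; simp only [mul_assoc]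
    _ = σ := by rw [hab, hba, mul_one, one_mul]

/-- `P ♯ σ` dominates every positive semidefinite subsolution of the Riccati equation. -/
lemma le_msharp {P σ T : Matrix n n ℂ} (hP : P.PosDef) (hT : 0 ≤ T)
    (h : T * P⁻¹ * T ≤ σ) : T ≤ msharp P σ := by
  have hP0 := hP.posSemidef.nonneg
  have hab := mpow_mul_mpow_neg hP (1/2)
  have hba := mpow_neg_mul_mpow hP (1/2)
  have ha := mpow_nonneg hP0 (1/2)
  have hb := mpow_nonneg hP0 (-(1/2))
  rw [← mpow_neg_half_mul_self hP] at h
  rw [msharp]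
  generalize mpow P (1/2) = a at *
  generalize mpow P (-(1/2)) = b at *
  have hX : 0 ≤ b * T * b := by simpa using conj_mono hb hT
  have h2 : (b * T * b) * (b * T * b) ≤ b * σ * b := by
    refine le_trans (le_of_eq ?_) (conj_mono hb h)
    simp only [mul_assoc]
  have hXX : 0 ≤ (b * T * b) * (b * T * b) := by simpa using conj_mono hX zero_le_one
  have h3 : b * T * b ≤ mpow (b * σ * b) (1/2) := by
    rw [mpow_eq_rpow (hXX.trans h2), ← CFC.sqrt_eq_rpow]
    calc b * T * b = CFC.sqrt ((b * T * b) * (b * T * b)) := (CFC.sqrt_mul_self _ hX).symm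
      _ ≤ _ := CFC.sqrt_le_sqrt _ _ h2
  have h4 := conj_mono ha h3
  have h5 : a * (b * T * b) * a = T := by
    calc a * (b * T * b) * a = (a * b) * T * (b * a) := by simp only [mul_assoc]
      _ = T := by rw [hab, hba, mul_one, one_mul]
  rwa [h5] at h4

lemma block_posSemidef_iff {P σ T : Matrix n n ℂ} (hP : P.PosDef) (hT : T.PosSemidef) :
    (Matrix.fromBlocks P T T σ).PosSemidef ↔ T * P⁻¹ * T ≤ σ := by
  have : Invertible P := hP.isUnit.invertible
  have h := Matrix.PosDef.fromBlocks₁₁ T σ hP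
  rw [hT.1.eq] at h
  exact h

lemma trace_mul_mono {ρ A B : Matrix n n ℂ} (hρ : 0 ≤ ρ) (h : A ≤ B) :
    (ρ * A).trace.re ≤ (ρ * B).trace.re := by
  have key : ∀ X : Matrix n n ℂ, (ρ * X).trace = (mpow ρ (1/2) * X * mpow ρ (1/2)).trace := by
    intro X
    rw [Matrix.trace_mul_cycle, mpow_half_mul_self hρ]
  have h1 := conj_mono (mpow_nonneg hρ (1/2)) h
  have h2 := (Matrix.le_iff.1 h1).trace_nonneg
  rw [Matrix.trace_sub, ← key, ← key] at h2
  have h3 := (Complex.le_def.1 h2).1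
  simpa using h3

end

/-- Variational form for `t ∈ [0, 1/2]`: `F_t^spec(ρ,σ)` is the greatest
value of `Tr(ρ T^{2t})` over the spectrahedron
`K(ρ,σ) = {T ⪰ 0 : [[ρ⁻¹, T], [T, σ]] ⪰ 0}`, and the maximum is attained
at `T = ρ⁻¹ ♯ σ`. -/
theorem specFid_variational {n : Type*} [Fintype n] [DecidableEq n]
    (ρ σ : Matrix n n ℂ) (hρ : ρ.PosDef) (hσ : σ.PosDef)
    (hρ1 : ρ.trace = 1) (hσ1 : σ.trace = 1)
    (t : ℝ) (ht : t ∈ Set.Icc (0 : ℝ) (1/2)) :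
    IsGreatest
      {x : ℝ | ∃ T : Matrix n n ℂ, T.PosSemidef ∧
        (Matrix.fromBlocks ρ⁻¹ T T σ).PosSemidef ∧
        x = (Matrix.trace (ρ * mpow T (2 * t))).re}
      ((specFid t ρ σ).re) ∧
    ((msharp ρ⁻¹ σ).PosSemidef ∧
      (Matrix.fromBlocks ρ⁻¹ (msharp ρ⁻¹ σ) (msharp ρ⁻¹ σ) σ).PosSemidef ∧
      (Matrix.trace (ρ * mpow (msharp ρ⁻¹ σ) (2 * t))).re = (specFid t ρ σ).re) := by
  have hP : ρ⁻¹.PosDef := hρ.inv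
  have hσ0 : 0 ≤ σ := hσ.posSemidef.nonneg
  have hG := msharp_nonneg hP hσ0
  have hG' := Matrix.nonneg_iff_posSemidef.1 hG
  have hK := (block_posSemidef_iff hP hG').2 (msharp_riccati hP hσ0).le
  refine ⟨⟨⟨_, hG', hK, rfl⟩, ?_⟩, hG', hK, rfl⟩
  rintro _ ⟨T, hT, hTK, rfl⟩
  have hle := le_msharp hP hT.nonneg ((block_posSemidef_iff hP hT).1 hTK)
  refine trace_mul_mono hρ.posSemidef.nonneg ?_
  rw [mpow_eq_rpow hT.nonneg, mpow_eq_rpow hG]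
  exact CFC.rpow_le_rpow ⟨by linarith [ht.1], by linarith [ht.2]⟩ hle
end
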